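/- arXiv:2009.07160 — 2 statements merged into one kernel-verified Lean document; each statement's English description precedes it below -/
import Mathlib

section
/- Unique minimizer of the effective potential: For every L > 0 there exists a unique r_L > 0 such that ψ_L attains its minimum over (0,∞) at r_L, and this minimum value ψ_L(r_L) is negative; moreover, the map (0,∞) ∋ L ↦ r_L is continuously differentiable, and r_L is characterized by m_0(r_L) = L/r_L. -/
/-!
Everything is governed by `g r = r * m₀ r`, because `ψ_L'(r) = (g r - L) / r ^ 3` on `(0,∞)`.
Since `m₀` is nonnegative, nondecreasing and eventually bounded below by a positive constant, `g`
vanishes at `0`, tends to infinity, and is strictly increasing wherever it is positive. Hence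
`g r = L` has exactly one positive solution `r_L`; `ψ_L` strictly decreases before `r_L` and
strictly increases after it, so `r_L` is the unique minimizer. The minimal value is negative because
`ψ_L` increases strictly to its limit `0` on `[r_L,∞)`.

For regularity, `g` is `C¹` with `g' r = m₀ r + 4π r³ ρ₀ r > 0` where `m₀ r > 0`, so the inverse
function theorem provides a `C¹` local inverse, which agrees with `L ↦ r_L` by uniqueness.
-/

open MeasureTheory Real Set Filter

noncomputable section

/-- The effective potential ψ_L(r) = U₀(r) + L/(2r²). -/
def psiEff (U0 : ℝ → ℝ) (L r : ℝ) : ℝ := U0 r + L / (2 * r ^ 2)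

/-- The radial data of an isotropic Newtonian steady state: ρ₀ is the (radial)
    spatial density, m₀(r) = 4π ∫₀^r s² ρ₀(s) ds the mass function, and U₀ the
    radial potential, which satisfies U₀'(r) = m₀(r)/r² and U₀(r) → 0 as r → ∞. -/
structure RadialSteadyState (ρ0 m0 U0 : ℝ → ℝ) : Prop where
  ρ0_cont : Continuous ρ0
  ρ0_nonneg : ∀ r, 0 ≤ ρ0 r
  ρ0_compSupp : HasCompactSupport ρ0
  ρ0_nontrivial : ∃ r, 0 ≤ r ∧ 0 < ρ0 r
  m0_def : ∀ r, m0 r = 4 * Real.pi * ∫ s in (0:ℝ)..r, s ^ 2 * ρ0 s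
  U0_deriv : ∀ r > 0, HasDerivAt U0 (m0 r / r ^ 2) r
  U0_decay : Tendsto U0 atTop (nhds 0)

namespace RadialSteadyState

variable {ρ0 m0 U0 : ℝ → ℝ}

lemma hasDerivAt_mass (h : RadialSteadyState ρ0 m0 U0) (r : ℝ) :
    HasDerivAt m0 (4 * Real.pi * (r ^ 2 * ρ0 r)) r := by
  have hc : Continuous fun s : ℝ => s ^ 2 * ρ0 s := (continuous_id.pow 2).mul h.ρ0_cont
  rw [show m0 = fun r => 4 * Real.pi * ∫ s in (0:ℝ)..r, s ^ 2 * ρ0 s from funext h.m0_def]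
  exact (hc.integral_hasStrictDerivAt 0 r).hasDerivAt.const_mul _

lemma mass_monotone (h : RadialSteadyState ρ0 m0 U0) : Monotone m0 := by
  refine monotone_of_deriv_nonneg (fun r => (h.hasDerivAt_mass r).differentiableAt) fun r => ?_
  rw [(h.hasDerivAt_mass r).deriv]
  have := h.ρ0_nonneg r
  positivity

lemma mass_zero (h : RadialSteadyState ρ0 m0 U0) : m0 0 = 0 := by simp [h.m0_def]

lemma contDiff_mass (h : RadialSteadyState ρ0 m0 U0) : ContDiff ℝ 1 m0 := by
  rw [contDiff_one_iff_deriv]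
  refine ⟨fun r => (h.hasDerivAt_mass r).differentiableAt, ?_⟩
  rw [show deriv m0 = fun r => 4 * Real.pi * (r ^ 2 * ρ0 r) from
    funext fun r => (h.hasDerivAt_mass r).deriv]
  have := h.ρ0_cont
  fun_prop

/-- The mass is positive at some positive radius. The radius provided by the nontriviality hypothesis
may be `0`, where `m₀' = 0`, so continuity of the density is used to move to a positive one. -/
lemma exists_mass_pos (h : RadialSteadyState ρ0 m0 U0) : ∃ r, 0 < r ∧ 0 < m0 r := by
  obtain ⟨a, ha, hρ⟩ := h.ρ0_nontrivial
  have hev : ∀ᶠ x in nhdsWithin a (Ioi a), 0 < ρ0 x :=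
    (h.ρ0_cont.continuousAt.eventually (lt_mem_nhds hρ)).filter_mono nhdsWithin_le_nhds
  obtain ⟨b, hb, hab⟩ := (hev.and self_mem_nhdsWithin).exists
  have hb0 : 0 < b := lt_of_le_of_lt ha hab
  refine ⟨b + 1, by linarith, ?_⟩
  -- If `m₀ (b + 1) = 0`, then `m₀` attains a local maximum at `b`, where its derivative is positive.
  by_contra! hle
  have hmax : IsLocalMax m0 b := by
    filter_upwards [gt_mem_nhds (show b < b + 1 by linarith)] with x hx
    have h1 := h.mass_monotone hx.le
    have h2 := h.mass_monotone hb0.le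
    rw [h.mass_zero] at h2
    linarith
  have h0 := hmax.hasDerivAt_eq_zero (h.hasDerivAt_mass b)
  have : 0 < 4 * Real.pi * (b ^ 2 * ρ0 b) := by positivity
  linarith

/-- `r * m₀ r` is strictly increasing from any positive radius at which it is positive. -/
lemma mul_mass_lt (h : RadialSteadyState ρ0 m0 U0) {r s : ℝ} (hr : 0 < r) (hrs : r < s)
    (hs : 0 < s * m0 s) : r * m0 r < s * m0 s := by
  have hs0 : 0 < m0 s := pos_of_mul_pos_right hs (hr.trans hrs).le
  calc r * m0 r ≤ r * m0 s := by gcongr; exact h.mass_monotone hrs.le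
    _ < s * m0 s := by gcongr

lemma mul_mass_inj (h : RadialSteadyState ρ0 m0 U0) {L r s : ℝ} (hL : 0 < L) (hr : 0 < r)
    (hs : 0 < s) (hrL : r * m0 r = L) (hsL : s * m0 s = L) : r = s := by
  rcases lt_trichotomy r s with hlt | rfl | hlt
  · have := h.mul_mass_lt hr hlt (hsL ▸ hL)
    linarith
  · rfl
  · have := h.mul_mass_lt hs hlt (hrL ▸ hL)
    linarith

lemma exists_mul_mass_eq (h : RadialSteadyState ρ0 m0 U0) {L : ℝ} (hL : 0 < L) :
    ∃ r, 0 < r ∧ r * m0 r = L := by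
  obtain ⟨a, ha, hma⟩ := h.exists_mass_pos
  set R := max a (L / m0 a) with hR
  have hR0 : 0 < R := lt_max_of_lt_left ha
  have hLR : L ≤ R * m0 R :=
    calc L = L / m0 a * m0 a := by field_simp
      _ ≤ R * m0 R := by
        gcongr
        · exact le_max_right _ _
        · exact h.mass_monotone (le_max_left _ _)
  have hc : Continuous fun r => r * m0 r := continuous_id.mul h.contDiff_mass.continuous
  obtain ⟨r, hr, hrL⟩ := intermediate_value_Icc hR0.le hc.continuousOn
    (show L ∈ Icc (0 * m0 0) (R * m0 R) from ⟨by simpa using hL.le, hLR⟩)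
  have hrL : r * m0 r = L := hrL
  refine ⟨r, hr.1.lt_of_ne ?_, hrL⟩
  rintro rfl
  simp [hL.ne] at hrL

lemma hasDerivAt_psiEff (h : RadialSteadyState ρ0 m0 U0) (L : ℝ) {r : ℝ} (hr : 0 < r) :
    HasDerivAt (psiEff U0 L) ((r * m0 r - L) / r ^ 3) r := by
  have h1 : HasDerivAt (fun r : ℝ => 2 * r ^ 2) (2 * (2 * r)) r := by
    simpa using (hasDerivAt_pow 2 r).const_mul (2 : ℝ)
  have h2 := (hasDerivAt_const r L).fun_div h1 (by positivity)
  refine ((h.U0_deriv r hr).add h2).congr_deriv ?_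
  field_simp
  ring

lemma tendsto_psiEff (h : RadialSteadyState ρ0 m0 U0) (L : ℝ) :
    Tendsto (psiEff U0 L) atTop (nhds 0) := by
  have h1 : Tendsto (fun r : ℝ => L / (2 * r ^ 2)) atTop (nhds 0) :=
    tendsto_const_nhds.div_atTop
      ((tendsto_pow_atTop two_ne_zero).const_mul_atTop (by norm_num))
  rw [← add_zero (0 : ℝ)]
  exact h.U0_decay.add h1

lemma strictAntiOn_psiEff (h : RadialSteadyState ρ0 m0 U0) {L r : ℝ} (hL : 0 < L)
    (hrL : r * m0 r = L) : StrictAntiOn (psiEff U0 L) (Ioc 0 r) := by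
  refine strictAntiOn_of_deriv_neg (convex_Ioc 0 r)
    (fun x hx => (h.hasDerivAt_psiEff L hx.1).continuousAt.continuousWithinAt) fun x hx => ?_
  rw [interior_Ioc] at hx
  rw [(h.hasDerivAt_psiEff L hx.1).deriv]
  have := h.mul_mass_lt hx.1 hx.2 (hrL ▸ hL)
  exact div_neg_of_neg_of_pos (by linarith) (pow_pos hx.1 3)

lemma strictMonoOn_psiEff (h : RadialSteadyState ρ0 m0 U0) {L r : ℝ} (hL : 0 < L) (hr : 0 < r)
    (hrL : r * m0 r = L) : StrictMonoOn (psiEff U0 L) (Ici r) := by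
  refine strictMonoOn_of_deriv_pos (convex_Ici r)
    (fun x hx => (h.hasDerivAt_psiEff L (hr.trans_le hx)).continuousAt.continuousWithinAt)
    fun x hx => ?_
  rw [interior_Ici] at hx
  have hx : r < x := hx
  have hx0 := hr.trans hx
  rw [(h.hasDerivAt_psiEff L hx0).deriv]
  have hm : 0 < m0 x :=
    (pos_of_mul_pos_right (hrL ▸ hL : 0 < r * m0 r) hr.le).trans_le (h.mass_monotone hx.le)
  have := h.mul_mass_lt hr hx (mul_pos hx0 hm)
  exact div_pos (by linarith) (pow_pos hx0 3)

/-- Any selection of positive solutions of `r * m₀ r = L` is `C¹` in `L > 0`: uniqueness forces it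
to agree with the local inverse of `r ↦ r * m₀ r`. -/
lemma contDiffOn_radius (h : RadialSteadyState ρ0 m0 U0) {rL : ℝ → ℝ}
    (hpos : ∀ L > 0, 0 < rL L) (heq : ∀ L > 0, rL L * m0 (rL L) = L) :
    ContDiffOn ℝ 1 rL (Ioi 0) := by
  intro L hL
  have hL : 0 < L := hL
  refine ContDiffAt.contDiffWithinAt ?_
  set r := rL L with hr
  have hr0 : 0 < r := hpos L hL
  have hrL : r * m0 r = L := heq L hL
  have hm : 0 < m0 r := pos_of_mul_pos_right (hrL ▸ hL : 0 < r * m0 r) hr0.le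
  have hg : ContDiffAt ℝ 1 (fun r => r * m0 r) r := (contDiff_id.mul h.contDiff_mass).contDiffAt
  have hd : HasDerivAt (fun r => r * m0 r) (1 * m0 r + r * (4 * Real.pi * (r ^ 2 * ρ0 r))) r :=
    (hasDerivAt_id r).mul (h.hasDerivAt_mass r)
  have hne : 1 * m0 r + r * (4 * Real.pi * (r ^ 2 * ρ0 r)) ≠ 0 := by
    have := h.ρ0_nonneg r
    positivity
  have hfd := hd.hasFDerivAt_equiv hne
  have hinv := hg.to_localInverse hfd one_ne_zero
  have hstrict := hg.hasStrictFDerivAt' hfd one_ne_zero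
  have hval := hstrict.localInverse_apply_image
  have hcont := hstrict.localInverse_continuousAt
  have hright := hstrict.eventually_right_inverse
  simp only [hrL] at hinv hval hcont hright
  refine hinv.congr_of_eventuallyEq ?_
  have hposev := hcont.eventually (lt_mem_nhds (a := 0) (by rw [hval]; exact hr0))
  filter_upwards [hposev, hright, lt_mem_nhds hL] with y hy1 hy2 hy3
  exact h.mul_mass_inj hy3 (hpos y hy3) hy1 (heq y hy3) hy2

end RadialSteadyState

/-- Lemma 4.1 (a): for every L > 0 the effective potential ψ_L has a unique
    minimizer r_L > 0 on (0,∞), the minimal value ψ_L(r_L) is negative, the map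
    L ↦ r_L is continuously differentiable on (0,∞), and r_L is characterized by
    m₀(r_L) = L / r_L. -/
theorem effective_potential_minimizer
    (ρ0 m0 U0 : ℝ → ℝ) (h : RadialSteadyState ρ0 m0 U0) :
    ∃ rL : ℝ → ℝ, ContDiffOn ℝ 1 rL (Ioi 0) ∧
      ∀ L > 0, 0 < rL L ∧ IsMinOn (psiEff U0 L) (Ioi 0) (rL L) ∧
        psiEff U0 L (rL L) < 0 ∧
        (∀ r ∈ Ioi (0:ℝ), IsMinOn (psiEff U0 L) (Ioi 0) r → r = rL L) ∧
        m0 (rL L) = L / rL L := by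
  have hex : ∀ L : ℝ, ∃ r, 0 < L → 0 < r ∧ r * m0 r = L := fun L => by
    by_cases hL : 0 < L
    · obtain ⟨r, hr⟩ := h.exists_mul_mass_eq hL
      exact ⟨r, fun _ => hr⟩
    · exact ⟨0, fun h => absurd h hL⟩
  choose rL hrL using hex
  refine ⟨rL, h.contDiffOn_radius (fun L hL => (hrL L hL).1) (fun L hL => (hrL L hL).2), ?_⟩
  intro L hL
  obtain ⟨hr, hm⟩ := hrL L hL
  have hanti := h.strictAntiOn_psiEff hL hm
  have hmono := h.strictMonoOn_psiEff hL hr hm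
  refine ⟨hr, ?_, ?_, ?_, ?_⟩
  · intro x hx
    rcases le_total x (rL L) with hle | hle
    · exact hanti.antitoneOn ⟨hx, hle⟩ ⟨hr, le_rfl⟩ hle
    · exact hmono.monotoneOn self_mem_Ici hle hle
  · have hlt : rL L < rL L + 1 := by linarith
    refine (hmono self_mem_Ici hlt.le hlt).trans_le ?_
    refine ge_of_tendsto (h.tendsto_psiEff L) ?_
    filter_upwards [eventually_ge_atTop (rL L + 1)] with x hx
    exact hmono.monotoneOn hlt.le (hlt.le.trans hx) hx
  · intro r hr' hmin
    have hr' : 0 < r := hr'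
    have h0 := (hmin.isLocalMin (Ioi_mem_nhds hr')).hasDerivAt_eq_zero
      (h.hasDerivAt_psiEff L hr')
    have h1 : r * m0 r - L = 0 := by
      simpa [hr'.ne'] using h0
    exact h.mul_mass_inj hL hr' hr (by linarith) hm
  · rw [eq_div_iff hr.ne', mul_comm]
    exact hm

end
end

section
/- Lower bound for the radial kinetic term: For every L > 0, every E with ψ_L(r_L) < E < 0, and every r ∈ [r_-(E,L), r_+(E,L)], one has E − ψ_L(r) ≥ L · (r_+(E,L) − r)(r − r_-(E,L)) / (2 r² r_-(E,L) r_+(E,L)). -/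
/-!
In the inverse radius `w = 1 / r` the potential satisfies
`d/dw U₀(1/w) = -r² U₀'(r) = -m₀(r)`. The mass `m₀` is nondecreasing in `r`, so this derivative is
nondecreasing in `w`, i.e. `w ↦ U₀(1/w)` is convex on `(0, ∞)` (`RadialSteadyState.convexOn_inv`).
The effective potential becomes `U₀(1/w) + L w² / 2`, which is thus strongly convex with
modulus `L`. It equals `E` at `a = 1/r₊` and `b = 1/r₋`, so strong convexity gives
`E - ψ_L ≥ (L/2) (b - w) (w - a)` for `w ∈ [a, b]`, and the right-hand side is the claimed bound
written in terms of `r`.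
-/

open MeasureTheory Real Set Filter

noncomputable section

theorem RadialSteadyState.mass_mono {ρ0 m0 U0 : ℝ → ℝ} (h : RadialSteadyState ρ0 m0 U0) :
    Monotone m0 := by
  intro x y hxy
  have hc : Continuous fun s : ℝ => s ^ 2 * ρ0 s := (continuous_pow 2).mul h.ρ0_cont
  rw [h.m0_def, h.m0_def]
  refine mul_le_mul_of_nonneg_left ?_ (by positivity)
  rw [← intervalIntegral.integral_add_adjacent_intervals
    (hc.intervalIntegrable 0 x) (hc.intervalIntegrable x y)]
  exact le_add_of_nonneg_right <|
    intervalIntegral.integral_nonneg hxy fun s _ => mul_nonneg (sq_nonneg s) (h.ρ0_nonneg s)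

/-- The potential is a convex function of the inverse radius, because its derivative in that
variable is minus the mass function. -/
theorem RadialSteadyState.convexOn_inv {ρ0 m0 U0 : ℝ → ℝ} (h : RadialSteadyState ρ0 m0 U0) :
    ConvexOn ℝ (Ioi 0) fun w => U0 w⁻¹ := by
  have hd : ∀ w : ℝ, 0 < w → HasDerivAt (fun w => U0 w⁻¹) (-m0 w⁻¹) w := by
    intro w hw
    have hcomp := (h.U0_deriv w⁻¹ (inv_pos.2 hw)).comp w (hasDerivAt_inv hw.ne')
    refine hcomp.congr_deriv ?_
    have hw0 := hw.ne'
    field_simp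
  refine MonotoneOn.convexOn_of_deriv (convex_Ioi 0)
    (fun w hw => (hd w hw).continuousAt.continuousWithinAt) ?_ ?_
  · rw [interior_Ioi]
    exact fun w hw => (hd w hw).differentiableAt.differentiableWithinAt
  · rw [interior_Ioi]
    intro x hx y hy hxy
    rw [(hd x hx).deriv, (hd y hy).deriv]
    exact neg_le_neg (h.mass_mono (inv_anti₀ hx hxy))

/-- Lemma 4.1 (d): lower bound for the radial kinetic term. For L > 0,
    ψ_L(r_L) < E < 0 and r ∈ [r_-(E,L), r_+(E,L)],
    E − ψ_L(r) ≥ L (r_+(E,L) − r)(r − r_-(E,L)) / (2 r² r_-(E,L) r_+(E,L)). -/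
theorem radial_kinetic_lower_bound
    (ρ0 m0 U0 : ℝ → ℝ) (h : RadialSteadyState ρ0 m0 U0)
    (rL : ℝ → ℝ)
    (hrL : ∀ L > 0, 0 < rL L ∧ IsMinOn (psiEff U0 L) (Ioi 0) (rL L) ∧
      psiEff U0 L (rL L) < 0)
    (rm rp : ℝ → ℝ → ℝ)
    (hrmp : ∀ L > 0, ∀ E, psiEff U0 L (rL L) < E → E < 0 →
      0 < rm E L ∧ rm E L < rL L ∧ rL L < rp E L ∧
      psiEff U0 L (rm E L) = E ∧ psiEff U0 L (rp E L) = E) :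
    ∀ L > 0, ∀ E, psiEff U0 L (rL L) < E → E < 0 →
      ∀ r ∈ Icc (rm E L) (rp E L),
        E - psiEff U0 L r ≥
          L * ((rp E L - r) * (r - rm E L)) / (2 * r ^ 2 * rm E L * rp E L) := by
  intro L hL E hE hE0 r ⟨hr1, hr2⟩
  obtain ⟨hm, hmL, hLp, hEm, hEp⟩ := hrmp L hL E hE hE0
  generalize rm E L = p at *
  generalize rp E L = q at *
  have hr : 0 < r := hm.trans_le hr1
  have hq : 0 < q := hr.trans_le hr2
  -- Write `1 / r = s * (1 / q) + t * (1 / p)` as a convex combination.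
  have hmem : r⁻¹ ∈ segment ℝ q⁻¹ p⁻¹ := by
    rw [segment_eq_Icc (inv_anti₀ hm (hr1.trans hr2))]
    exact ⟨inv_anti₀ hr hr2, inv_anti₀ hm hr1⟩
  obtain ⟨s, t, hs, ht, hst, hw⟩ := hmem
  have hconv := h.convexOn_inv.2 (inv_pos.2 hq) (inv_pos.2 hm) hs ht hst
  simp only [hw, inv_inv] at hconv
  simp only [smul_eq_mul] at hconv hw
  have hpsi : ∀ x, psiEff U0 L x = U0 x + L / 2 * x⁻¹ ^ 2 := by
    intro x
    rw [psiEff, inv_pow, div_mul_eq_div_div, div_eq_mul_inv (L / 2)]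
  have hrhs : L * ((q - r) * (r - p)) / (2 * r ^ 2 * p * q)
      = L / 2 * ((p⁻¹ - r⁻¹) * (r⁻¹ - q⁻¹)) := by
    field_simp
  rw [hpsi] at hEm hEp ⊢
  rw [hrhs, ← hw]
  obtain rfl : s = 1 - t := by linarith
  have hUq : U0 q = E - L / 2 * q⁻¹ ^ 2 := by linarith
  have hUp : U0 p = E - L / 2 * p⁻¹ ^ 2 := by linarith
  rw [hUq, hUp] at hconv
  linear_combination hconv

end
end
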